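/- Let n ≥ 4 and let S be the Specht Z₂𝔖_n-lattice for the partition (n−2,1,1), realized with Z₂-basis {b(i₁,i₂) : 2 ≤ i₁ < i₂ ≤ n}. Then the set S₁ = { Σ α(i₁,i₂) b(i₁,i₂) : Σ α(i₁,i₂) ≡ 0 mod 2 } is a Z₂𝔖_n-submodule of S of index 2, and a Z₂-basis of S₁ is given by {b(i₁,i₂) + b(n−1,n) : (i₁,i₂) ≠ (n−1,n)} ∪ {2·b(n−1,n)}. -/

import Mathlib

open Finset

noncomputable section

/-- The `R`-linear map `⋀^k(f)` induced by `f`. -/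
def exteriorPowerMap {R M N : Type*} [CommRing R] [AddCommGroup M] [Module R M]
    [AddCommGroup N] [Module R N] (k : ℕ) (f : M →ₗ[R] N) : ⋀[R]^k M →ₗ[R] ⋀[R]^k N :=
  LinearMap.restrict (ExteriorAlgebra.map f).toLinearMap (p := ⋀[R]^k M) (q := ⋀[R]^k N)
    (fun x hx => by
      have h1 : Submodule.map (ExteriorAlgebra.map f).toLinearMap (⋀[R]^k M) ≤ ⋀[R]^k N := by
        rw [Submodule.map_pow]
        refine pow_le_pow_left' ?_ k
        rw [ExteriorAlgebra.ι_range_map_map]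
        exact LinearMap.map_le_range
      exact h1 (Submodule.mem_map_of_mem hx))

/-- The wedge `x ∧ y` in `⋀^2(M)`. -/
def wedgePair {R M : Type*} [CommRing R] [AddCommGroup M] [Module R M]
    (x y : M) : ⋀[R]^2 M :=
  ⟨ExteriorAlgebra.ιMulti R 2 ![x, y],
    ExteriorAlgebra.ιMulti_range R 2 (Set.mem_range_self _)⟩

variable (R : Type*) [CommRing R] (n : ℕ)

/-- The coefficient-sum functional on the natural permutation module. -/
def sumFunctional : (Fin n → R) →ₗ[R] R := ∑ i, LinearMap.proj i

/-- The natural Specht lattice `S^{(n-1,1)}`, realized as the kernel of the coefficient-sum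
functional on the natural permutation module. -/
def spechtW : Submodule R (Fin n → R) := LinearMap.ker (sumFunctional R n)

/-- The standard basis vector `e(1,i) = b_i − b_1` of the natural Specht lattice
(with `0`-based indices, index `0` playing the role of `1`). -/
def spechtE (h0 : 0 < n) (i : Fin n) : ↥(spechtW R n) :=
  ⟨Pi.single i 1 - Pi.single (⟨0, h0⟩ : Fin n) 1, by
    simp [spechtW, sumFunctional, LinearMap.mem_ker, Finset.sum_sub_distrib,
      Finset.sum_pi_single']⟩

/-- The action of `σ ∈ 𝔖_n` on the natural Specht lattice. -/
def spechtPerm (σ : Equiv.Perm (Fin n)) : ↥(spechtW R n) →ₗ[R] ↥(spechtW R n) :=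
  LinearMap.restrict (LinearMap.funLeft R R ⇑σ⁻¹)
    (fun x hx => by
      simp only [spechtW, LinearMap.mem_ker, sumFunctional, LinearMap.sum_apply,
        LinearMap.proj_apply, LinearMap.funLeft_apply] at hx ⊢
      rw [Equiv.sum_comp σ⁻¹ x]
      exact hx)

/-- The standard basis vector `b(i,j) = e(1,i) ∧ e(1,j)` of the Specht lattice
`S^{(n-2,1,1)} = ⋀²(S^{(n-1,1)})`. -/
def spechtBB (h0 : 0 < n) (i j : Fin n) : ⋀[R]^2 ↥(spechtW R n) :=
  wedgePair (spechtE R n h0 i) (spechtE R n h0 j)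

/-- The index set `{(i₁,i₂) : 2 ≤ i₁ < i₂ ≤ n}` of the standard basis of `S^{(n-2,1,1)}`
(`0`-based indices). -/
def PairIdx := {q : Fin n × Fin n // 0 < q.1.val ∧ q.1.val < q.2.val}

instance : Fintype (PairIdx n) := by unfold PairIdx; infer_instance
instance : DecidableEq (PairIdx n) := by unfold PairIdx; infer_instance

/-- The pair `(n-1, n)` (in `0`-based indices: `(n-2, n-1)`). -/
def pairMax (hn : 4 ≤ n) : PairIdx n :=
  ⟨(⟨n - 2, by omega⟩, ⟨n - 1, by omega⟩), ⟨show 0 < n - 2 by omega, show n - 2 < n - 1 by omega⟩⟩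


/-! ### Helper material for the proof -/

/-- The alternating map on pairs attached to an alternating bilinear map. -/
def altOf {R M N : Type*} [CommRing R] [AddCommGroup M] [Module R M]
    [AddCommGroup N] [Module R N] (B : M →ₗ[R] M →ₗ[R] N) (hB : ∀ x, B x x = 0) :
    M [⋀^Fin 2]→ₗ[R] N where
  toFun v := B (v 0) (v 1)
  map_update_add' := by
    intro inst m i x y
    rw [Subsingleton.elim inst (instDecidableEqFin 2)]
    fin_cases i <;> simp [Function.update]
  map_update_smul' := by
    intro inst m i c x
    rw [Subsingleton.elim inst (instDecidableEqFin 2)]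
    fin_cases i <;> simp [Function.update]
  map_eq_zero_of_eq' := by
    intro v i j h hij
    fin_cases i <;> fin_cases j <;> simp_all

/-- The linear form on the exterior square attached to an alternating bilinear map. -/
def formOf {R M N : Type*} [CommRing R] [AddCommGroup M] [Module R M]
    [AddCommGroup N] [Module R N] (B : M →ₗ[R] M →ₗ[R] N) (hB : ∀ x, B x x = 0) :
    ⋀[R]^2 M →ₗ[R] N :=
  exteriorPower.alternatingMapLinearEquiv (altOf B hB)

lemma formOf_iota {R M N : Type*} [CommRing R] [AddCommGroup M] [Module R M]
    [AddCommGroup N] [Module R N] (B : M →ₗ[R] M →ₗ[R] N) (hB : ∀ x, B x x = 0)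
    (v : Fin 2 → M) : formOf B hB (exteriorPower.ιMulti R 2 v) = B (v 0) (v 1) :=
  exteriorPower.alternatingMapLinearEquiv_apply_ιMulti _ _

lemma wedgePair_eq {R M : Type*} [CommRing R] [AddCommGroup M] [Module R M]
    (x y : M) : wedgePair (R := R) x y = exteriorPower.ιMulti R 2 ![x, y] := rfl

lemma formOf_wedge {R M N : Type*} [CommRing R] [AddCommGroup M] [Module R M]
    [AddCommGroup N] [Module R N] (B : M →ₗ[R] M →ₗ[R] N) (hB : ∀ x, B x x = 0)
    (x y : M) : formOf B hB (wedgePair x y) = B x y := by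
  rw [wedgePair_eq, formOf_iota]; rfl

lemma exteriorPowerMap_iota {R M N : Type*} [CommRing R] [AddCommGroup M] [Module R M]
    [AddCommGroup N] [Module R N] (f : M →ₗ[R] N) (v : Fin 2 → M) :
    exteriorPowerMap 2 f (exteriorPower.ιMulti R 2 v) = exteriorPower.ιMulti R 2 (f ∘ v) := by
  apply Subtype.ext
  exact ExteriorAlgebra.map_apply_ιMulti f v

lemma spechtW_sum {R : Type*} [CommRing R] {n : ℕ} (x : spechtW R n) :
    ∑ i, (x : Fin n → R) i = 0 := by
  have := x.2
  simpa [spechtW, sumFunctional, LinearMap.mem_ker] using this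

lemma spechtE_zero {R : Type*} [CommRing R] {n : ℕ} (h0 : 0 < n) (i : Fin n)
    (hi : i.val = 0) : spechtE R n h0 i = 0 := by
  obtain rfl : i = ⟨0, h0⟩ := Fin.ext hi
  apply Subtype.ext
  simp [spechtE]

lemma spechtE_apply {R : Type*} [CommRing R] {n : ℕ} (h0 : 0 < n) (i k : Fin n)
    (hk : 0 < k.val) : (spechtE R n h0 i : Fin n → R) k = if k = i then 1 else 0 := by
  have : k ≠ ⟨0, h0⟩ := by rintro rfl; simp at hk
  simp [spechtE, Pi.single_apply, this]

lemma spechtE_span (R : Type*) [CommRing R] (n : ℕ) (h0 : 0 < n) :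
    Submodule.span R (Set.range (spechtE R n h0)) = ⊤ := by
  rw [eq_top_iff]
  rintro x -
  have : x = ∑ i, (x : Fin n → R) i • spechtE R n h0 i := by
    apply Subtype.ext
    have h : ∑ i, (x : Fin n → R) i • (Pi.single (⟨0, h0⟩ : Fin n) (1 : R) : Fin n → R) = 0 := by
      rw [← Finset.sum_smul, spechtW_sum, zero_smul]
    simp only [Submodule.coe_sum, Submodule.coe_smul, spechtE, smul_sub, Finset.sum_sub_distrib, h,
      sub_zero]
    exact pi_eq_sum_univ' _
  rw [this]
  exact Submodule.sum_mem _ fun i _ => Submodule.smul_mem _ _ (Submodule.subset_span ⟨i, rfl⟩)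

lemma spechtBB_span (R : Type*) [CommRing R] (n : ℕ) (h0 : 0 < n) :
    Submodule.span R (Set.range fun q : PairIdx n => spechtBB R n h0 q.1.1 q.1.2) = ⊤ := by
  rw [eq_top_iff, ← exteriorPower.ιMulti_span_of_span R 2 _ (spechtE_span R n h0),
    Submodule.span_le]
  rintro _ ⟨a, ha, rfl⟩
  obtain ⟨i, hi⟩ := ha ⟨0, rfl⟩
  obtain ⟨j, hj⟩ := ha ⟨1, rfl⟩
  have hij : ∀ i j : Fin n, i.val < j.val → spechtBB R n h0 i j ∈
      Submodule.span R (Set.range fun q : PairIdx n => spechtBB R n h0 q.1.1 q.1.2) := by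
    intro i j hij
    by_cases h : i.val = 0
    · have : spechtBB R n h0 i j = 0 := by
        rw [spechtBB, wedgePair_eq]
        exact AlternatingMap.map_coord_zero _ 0 (by simp [spechtE_zero h0 i h])
      rw [this]; exact Submodule.zero_mem _
    · exact Submodule.subset_span ⟨⟨(i, j), by show 0 < i.val; omega, hij⟩, rfl⟩
  have hv : a = ![spechtE R n h0 i, spechtE R n h0 j] := by
    ext k : 1
    fin_cases k
    · exact hi.symm
    · exact hj.symm
  rw [hv]
  rcases lt_trichotomy i.val j.val with h | h | h
  · exact hij i j h
  · obtain rfl : i = j := Fin.ext h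
    have : exteriorPower.ιMulti R 2 ![spechtE R n h0 i, spechtE R n h0 i] = 0 :=
      AlternatingMap.map_eq_zero_of_eq _ _ (i := 0) (j := 1) rfl (by decide)
    rw [this]; exact Submodule.zero_mem _
  · have : exteriorPower.ιMulti R 2 ![spechtE R n h0 i, spechtE R n h0 j]
        = - spechtBB R n h0 j i := by
      rw [spechtBB, wedgePair_eq]
      rw [← AlternatingMap.map_swap _ _ (i := 0) (j := 1) (by decide)]
      congr 1
      ext k : 1
      fin_cases k <;> simp
    rw [this]
    exact Submodule.neg_mem _ (hij j i h)

/-- The coordinate `x_k` on the natural Specht lattice. -/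
def coordW (R : Type*) [CommRing R] (n : ℕ) (k : Fin n) : spechtW R n →ₗ[R] R :=
  (LinearMap.proj k).comp (spechtW R n).subtype

/-- The bilinear form `x_k y_l - x_l y_k`. -/
def minorB (R : Type*) [CommRing R] (n : ℕ) (k l : Fin n) :
    spechtW R n →ₗ[R] spechtW R n →ₗ[R] R :=
  (LinearMap.mul R R).compl₁₂ (coordW R n k) (coordW R n l)
    - (LinearMap.mul R R).compl₁₂ (coordW R n l) (coordW R n k)

lemma minorB_apply (R : Type*) [CommRing R] (n : ℕ) (k l : Fin n) (x y : spechtW R n) :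
    minorB R n k l x y = x.1 k * y.1 l - x.1 l * y.1 k := rfl

/-- The coordinate functionals on the exterior square. -/
def minorF (R : Type*) [CommRing R] (n : ℕ) (k l : Fin n) : ⋀[R]^2 (spechtW R n) →ₗ[R] R :=
  formOf (minorB R n k l) (fun x => by rw [minorB_apply]; ring)

lemma minorF_BB (R : Type*) [CommRing R] (n : ℕ) (h0 : 0 < n) (p q : PairIdx n) :
    minorF R n p.1.1 p.1.2 (spechtBB R n h0 q.1.1 q.1.2) = if q = p then 1 else 0 := by
  have e : q = p ↔ (p.1.1 = q.1.1 ∧ p.1.2 = q.1.2) := by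
    constructor
    · rintro rfl; exact ⟨rfl, rfl⟩
    · rintro ⟨h1, h2⟩; exact Subtype.ext (Prod.ext h1.symm h2.symm)
  have hk : 0 < p.1.1.val := p.2.1
  have hkl : p.1.1.val < p.1.2.val := p.2.2
  have hij : q.1.1.val < q.1.2.val := q.2.2
  rw [minorF, spechtBB, formOf_wedge, minorB_apply, if_congr e rfl rfl]
  generalize p.1.1 = k at *
  generalize p.1.2 = l at *
  generalize q.1.1 = i at *
  generalize q.1.2 = j at *
  rw [spechtE_apply _ _ _ hk, spechtE_apply _ _ _ hk, spechtE_apply _ _ _ (by omega),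
    spechtE_apply _ _ _ (by omega)]
  have : ¬ (l = i ∧ k = j) := by rintro ⟨rfl, rfl⟩; omega
  clear e
  by_cases h1 : k = i <;> by_cases h2 : l = j <;> by_cases h3 : l = i <;> by_cases h4 : k = j <;>
    simp_all

lemma two_dvd_iff (x : ℤ_[2]) : x ∈ Ideal.span {(2 : ℤ_[2])} ↔ PadicInt.toZMod x = 0 := by
  rw [← RingHom.mem_ker, PadicInt.ker_toZMod, PadicInt.maximalIdeal_eq_span_p]
  simp

/-- The dot product modulo `2`. -/
def dotB (n : ℕ) : spechtW ℤ_[2] n →ₗ[ℤ_[2]] spechtW ℤ_[2] n →ₗ[ℤ_[2]]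
    (ℤ_[2] ⧸ Ideal.span {(2 : ℤ_[2])}) :=
  (∑ k, (LinearMap.mul ℤ_[2] ℤ_[2]).compl₁₂ (coordW ℤ_[2] n k) (coordW ℤ_[2] n k)).compr₂
    (Submodule.mkQ (Ideal.span {(2 : ℤ_[2])}))

lemma dotB_apply (n : ℕ) (x y : spechtW ℤ_[2] n) :
    dotB n x y = Submodule.mkQ (Ideal.span {(2 : ℤ_[2])}) (∑ k, x.1 k * y.1 k) := by
  simp only [dotB, LinearMap.compr₂_apply, LinearMap.sum_apply]
  rfl

lemma dotB_self (n : ℕ) (x : spechtW ℤ_[2] n) : dotB n x x = 0 := by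
  rw [dotB_apply, Submodule.mkQ_apply, Submodule.Quotient.mk_eq_zero, two_dvd_iff, map_sum]
  have h := congrArg PadicInt.toZMod (spechtW_sum x)
  rw [map_sum, map_zero] at h
  rw [← h]
  refine Finset.sum_congr rfl fun i _ => ?_
  rw [map_mul]
  generalize PadicInt.toZMod (x.1 i) = z
  revert z; decide

/-- The augmentation modulo `2`. -/
def augF (n : ℕ) : ⋀[ℤ_[2]]^2 (spechtW ℤ_[2] n) →ₗ[ℤ_[2]] (ℤ_[2] ⧸ Ideal.span {(2 : ℤ_[2])}) :=
  formOf (dotB n) (dotB_self n)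

lemma augF_BB (n : ℕ) (h0 : 0 < n) (q : PairIdx n) :
    augF n (spechtBB ℤ_[2] n h0 q.1.1 q.1.2) = Submodule.mkQ _ 1 := by
  obtain ⟨⟨i, j⟩, hi, hij⟩ := q
  simp only at hi hij
  rw [augF, spechtBB, formOf_wedge, dotB_apply]
  congr 1
  rw [Finset.sum_eq_single (⟨0, h0⟩ : Fin n)]
  · have h1 : (⟨0, h0⟩ : Fin n) ≠ i := by rintro rfl; simp at hi
    have h2 : (⟨0, h0⟩ : Fin n) ≠ j := by rintro rfl; simp at hij
    simp [spechtE, Pi.single_apply, h1, h2]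
  · intro k _ hk
    have : 0 < k.val := by
      rcases Nat.eq_zero_or_pos k.val with h | h
      · exact absurd (Fin.ext h) hk
      · exact h
    simp only [spechtE_apply h0 _ k this]
    have : ¬ (k = i ∧ k = j) := by rintro ⟨rfl, rfl⟩; omega
    by_cases h1 : k = i <;> by_cases h2 : k = j <;> simp_all
  · simp

lemma augF_perm (n : ℕ) (σ : Equiv.Perm (Fin n)) (x : ⋀[ℤ_[2]]^2 (spechtW ℤ_[2] n)) :
    augF n (exteriorPowerMap 2 (spechtPerm ℤ_[2] n σ) x) = augF n x := by
  have : (augF n).comp (exteriorPowerMap 2 (spechtPerm ℤ_[2] n σ)) = augF n := by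
    apply exteriorPower.linearMap_ext
    ext v
    simp only [LinearMap.compAlternatingMap_apply, LinearMap.comp_apply, exteriorPowerMap_iota]
    rw [augF, formOf_iota, formOf_iota, dotB_apply, dotB_apply]
    congr 1
    exact Equiv.sum_comp σ⁻¹ (fun k => (v 0).1 k * (v 1).1 k)
  exact LinearMap.congr_fun this x

lemma card_quot_two : Nat.card (ℤ_[2] ⧸ Ideal.span {(2 : ℤ_[2])}) = 2 := by
  have h : Ideal.span {(2 : ℤ_[2])} = RingHom.ker (PadicInt.toZMod (p := 2)) := by
    ext x; rw [two_dvd_iff, RingHom.mem_ker]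
  rw [h, Nat.card_congr (RingHom.quotientKerEquivOfSurjective
    (ZMod.ringHom_surjective (PadicInt.toZMod (p := 2)))).toEquiv]
  simp

lemma augF_sum (n : ℕ) (h0 : 0 < n) (α : PairIdx n → ℤ_[2]) :
    augF n (∑ q, α q • spechtBB ℤ_[2] n h0 q.1.1 q.1.2) = 0 ↔ ∃ c, ∑ q, α q = 2 * c := by
  simp only [map_sum, map_smul, augF_BB]
  simp only [← map_smul, ← map_sum, smul_eq_mul, mul_one]
  rw [Submodule.mkQ_apply, Submodule.Quotient.mk_eq_zero, Ideal.mem_span_singleton]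
  rfl

lemma exists_coeff (n : ℕ) (h0 : 0 < n) (x : ⋀[ℤ_[2]]^2 (spechtW ℤ_[2] n)) :
    ∃ α : PairIdx n → ℤ_[2], x = ∑ q, α q • spechtBB ℤ_[2] n h0 q.1.1 q.1.2 := by
  have : x ∈ Submodule.span ℤ_[2]
      (Set.range fun q : PairIdx n => spechtBB ℤ_[2] n h0 q.1.1 q.1.2) := by
    rw [spechtBB_span]; trivial
  obtain ⟨α, hα⟩ := (Submodule.mem_span_range_iff_exists_fun _).1 this
  exact ⟨α, hα.symm⟩

lemma li_aux {R M I : Type*} [CommRing R] [IsDomain R] [AddCommGroup M] [Module R M] [Fintype I]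
    [DecidableEq I] (h2 : (2 : R) ≠ 0) (b : I → M) (D : I → M →ₗ[R] R)
    (hD : ∀ p q, D p (b q) = if q = p then 1 else 0) (m : I) :
    LinearIndependent R (fun q => if q = m then (2 : R) • b m else b q + b m) := by
  rw [Fintype.linearIndependent_iff]
  intro g hg
  have key : ∀ p, p ≠ m → g p = 0 := by
    intro p hp
    have := congrArg (D p) hg
    rw [map_sum, map_zero, Finset.sum_eq_single p] at this
    · simpa [hp, hD, Ne.symm hp] using this
    · intro q _ hq
      by_cases h : q = m
      · simp [h, hD, Ne.symm hp]
      · simp [h, hD, hq, Ne.symm hp]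
    · simp
  intro p
  by_cases hp : p = m
  · subst hp
    have := congrArg (D p) hg
    rw [map_sum, map_zero, Finset.sum_eq_single p] at this
    · simpa [hD, h2] using this
    · intro q _ hq
      simp [key q hq]
    · simp
  · exact key p hp

lemma span_aux {R M I : Type*} [CommRing R] [AddCommGroup M] [Module R M] [Fintype I]
    [DecidableEq I] (b : I → M) (m : I) (α : I → R) (c : R) (hc : ∑ q, α q = 2 * c) :
    ∑ q, α q • b q ∈ Submodule.span R
      (Set.range (fun q => if q = m then (2 : R) • b m else b q + b m)) := by
  rw [Submodule.mem_span_range_iff_exists_fun]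
  refine ⟨fun q => if q = m then α m - c else α q, ?_⟩
  rw [← Finset.add_sum_erase _ _ (Finset.mem_univ m)] at hc
  rw [← Finset.add_sum_erase _ _ (Finset.mem_univ m),
    ← Finset.add_sum_erase univ (fun q => α q • b q) (Finset.mem_univ m)]
  rw [Finset.sum_congr rfl (g := fun q => α q • b q + α q • b m)
    (fun q hq => by simp [Finset.ne_of_mem_erase hq])]
  rw [Finset.sum_add_distrib, ← Finset.sum_smul, eq_sub_of_add_eq' hc]
  simp only [if_true]
  module

/-- Let `n ≥ 4` and let `S = S^{(n-2,1,1)}_{ℤ₂} = ⋀²(S^{(n-1,1)}_{ℤ₂})` be the Specht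
`ℤ₂𝔖_n`-lattice with standard basis `{b(i₁,i₂) : 2 ≤ i₁ < i₂ ≤ n}`.  Then the set
`S₁ = {Σ α(i₁,i₂)·b(i₁,i₂) : Σ α(i₁,i₂) ≡ 0 mod 2}` is a `ℤ₂𝔖_n`-submodule of `S` of index `2`,
and a `ℤ₂`-basis of `S₁` is given by
`{b(i₁,i₂) + b(n−1,n) : (i₁,i₂) ≠ (n−1,n)} ∪ {2·b(n−1,n)}`. -/
theorem specht_sublattice_S1 (n : ℕ) (hn : 4 ≤ n) :
    ∃ S₁ : Submodule ℤ_[2] (⋀[ℤ_[2]]^2 ↥(spechtW ℤ_[2] n)),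
      (S₁ : Set (⋀[ℤ_[2]]^2 ↥(spechtW ℤ_[2] n))) =
        {x | ∃ α : PairIdx n → ℤ_[2],
          x = ∑ q : PairIdx n, α q • spechtBB ℤ_[2] n (by omega) q.1.1 q.1.2 ∧
          ∃ c : ℤ_[2], (∑ q : PairIdx n, α q) = 2 * c} ∧
      (∀ (σ : Equiv.Perm (Fin n)), ∀ x ∈ S₁,
        exteriorPowerMap 2 (spechtPerm ℤ_[2] n σ) x ∈ S₁) ∧
      Nat.card ((⋀[ℤ_[2]]^2 ↥(spechtW ℤ_[2] n)) ⧸ S₁) = 2 ∧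
      LinearIndependent ℤ_[2] (fun q : PairIdx n =>
        if q = pairMax n hn then
          (2 : ℤ_[2]) • spechtBB ℤ_[2] n (by omega) (pairMax n hn).1.1 (pairMax n hn).1.2
        else spechtBB ℤ_[2] n (by omega) q.1.1 q.1.2
          + spechtBB ℤ_[2] n (by omega) (pairMax n hn).1.1 (pairMax n hn).1.2) ∧
      Submodule.span ℤ_[2] (Set.range (fun q : PairIdx n =>
        if q = pairMax n hn then
          (2 : ℤ_[2]) • spechtBB ℤ_[2] n (by omega) (pairMax n hn).1.1 (pairMax n hn).1.2
        else spechtBB ℤ_[2] n (by omega) q.1.1 q.1.2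
          + spechtBB ℤ_[2] n (by omega) (pairMax n hn).1.1 (pairMax n hn).1.2)) = S₁ := by
  have h0 : 0 < n := by omega
  refine ⟨LinearMap.ker (augF n), ?_, ?_, ?_, ?_, ?_⟩
  · ext x
    simp only [SetLike.mem_coe, LinearMap.mem_ker, Set.mem_setOf_eq]
    constructor
    · intro hx
      obtain ⟨α, rfl⟩ := exists_coeff n h0 x
      exact ⟨α, rfl, (augF_sum n h0 α).1 hx⟩
    · rintro ⟨α, rfl, h⟩
      exact (augF_sum n h0 α).2 h
  · intro σ x hx
    rw [LinearMap.mem_ker] at hx ⊢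
    rw [augF_perm, hx]
  · have hs : Function.Surjective (augF n) := by
      intro y
      obtain ⟨r, rfl⟩ := Submodule.mkQ_surjective _ y
      refine ⟨r • spechtBB ℤ_[2] n h0 (pairMax n hn).1.1 (pairMax n hn).1.2, ?_⟩
      rw [map_smul, augF_BB, ← map_smul, smul_eq_mul, mul_one]
    rw [Nat.card_congr ((augF n).quotKerEquivOfSurjective hs).toEquiv]
    exact card_quot_two
  · exact li_aux two_ne_zero (fun q : PairIdx n => spechtBB ℤ_[2] n h0 q.1.1 q.1.2)
      (fun p => minorF ℤ_[2] n p.1.1 p.1.2) (fun p q => minorF_BB ℤ_[2] n h0 p q) (pairMax n hn)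
  · set m := pairMax n hn
    apply le_antisymm
    · rw [Submodule.span_le]
      rintro _ ⟨q, rfl⟩
      have two : (2 : ℤ_[2]) • (Submodule.mkQ (Ideal.span {(2 : ℤ_[2])}) 1) = 0 := by
        rw [← map_smul, Submodule.mkQ_apply, Submodule.Quotient.mk_eq_zero]
        simp [Ideal.mem_span_singleton_self]
      simp only [SetLike.mem_coe, LinearMap.mem_ker]
      split_ifs with h
      · rw [map_smul, augF_BB, two]
      · rw [map_add, augF_BB, augF_BB, ← two_smul ℤ_[2], two]
    · intro x hx
      obtain ⟨α, rfl⟩ := exists_coeff n h0 x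
      obtain ⟨c, hc⟩ := (augF_sum n h0 α).1 hx
      exact span_aux (fun q : PairIdx n => spechtBB ℤ_[2] n h0 q.1.1 q.1.2) m α c hc

end
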